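/- Let G be a finite abelian group acting faithfully on a finite connected graph Γ such that the action preserves a fixed cyclic ordering of edges at each vertex and acts freely on the edge set. Then for every vertex μ of Γ, the valency of the orbit vertex μ̄ in the orbit graph Γ/G divides the valency of μ. -/

import Mathlib

/-- A Brauer graph `(Γ, 𝔬, m)`, presented via half-edges: `H` is the (finite, nonempty)
set of half-edges, `σ` is the successor permutation whose cycle at a vertex lists the
incident half-edges in the cyclic order `𝔬` (a loop contributes two half-edges, i.e. is
"listed twice"), `ι` is the fixed-point-free involution pairing the two half-edges of
each edge, `v` assigns to each half-edge its vertex (so the fibres of `v` are exactly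
the cycles of `σ`), the graph is connected, and `m` is the multiplicity function. -/
structure BrauerGraph where
  H : Type
  V : Type
  fintypeH : Fintype H
  decEqH : DecidableEq H
  fintypeV : Fintype V
  decEqV : DecidableEq V
  nonemptyH : Nonempty H
  σ : Equiv.Perm H
  ι : Equiv.Perm H
  ι_invol : ∀ h, ι (ι h) = h
  ι_ne : ∀ h, ι h ≠ h
  v : H → V
  v_surj : Function.Surjective v
  v_eq_iff : ∀ h h', v h = v h' ↔ ∃ n : ℤ, (σ ^ n) h = h'
  connected : ∀ h h' : H, ∃ g ∈ Subgroup.closure ({σ, ι} : Set (Equiv.Perm H)), g h = h'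
  m : V → ℕ
  m_pos : ∀ μ, 0 < m μ

attribute [instance] BrauerGraph.fintypeH BrauerGraph.decEqH
attribute [instance] BrauerGraph.fintypeV BrauerGraph.decEqV

namespace BrauerGraph

variable (Γ : BrauerGraph)

/-- The valency of a vertex: the number of incident half-edges (loops counted twice). -/
noncomputable def val (μ : Γ.V) : ℕ := Nat.card {h : Γ.H // Γ.v h = μ}

end BrauerGraph

/-- A Brauer action of a group `G` on a Brauer graph: a faithful action on half-edges
commuting with the successor permutation (i.e. orientation/successor preserving) and
with the edge involution (i.e. an action by graph automorphisms), and preserving the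
multiplicity function. -/
structure BrauerAction (G : Type) [Group G] (Γ : BrauerGraph) where
  e : G →* Equiv.Perm Γ.H
  faithful : Function.Injective e
  comm_σ : ∀ g h, e g (Γ.σ h) = Γ.σ (e g h)
  comm_ι : ∀ g h, e g (Γ.ι h) = Γ.ι (e g h)
  m_inv : ∀ g h, Γ.m (Γ.v (e g h)) = Γ.m (Γ.v h)

namespace BrauerAction

variable {G : Type} [Group G] {Γ : BrauerGraph}

/-- A free Brauer action: the action is free on the set of edges (loops counted twice,
i.e. on half-edges). -/
def IsFree (A : BrauerAction G Γ) : Prop := ∀ (g : G) (h : Γ.H), A.e g h = h → g = 1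

/-- The orbit equivalence relation of the action on half-edges. -/
def orbSetoid (A : BrauerAction G Γ) : Setoid Γ.H where
  r h h' := ∃ g : G, A.e g h = h'
  iseqv := by
    refine ⟨fun h => ⟨1, by simp⟩, ?_, ?_⟩
    · rintro h h' ⟨g, hg⟩
      exact ⟨g⁻¹, by rw [← hg, ← Equiv.Perm.mul_apply, ← map_mul]; simp⟩
    · rintro a b c ⟨g₁, hg₁⟩ ⟨g₂, hg₂⟩
      exact ⟨g₂ * g₁, by rw [map_mul, Equiv.Perm.mul_apply, hg₁, hg₂]⟩

/-- The orbit equivalence relation of the action restricted to a subset of half-edges. -/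
def subOrbSetoid (A : BrauerAction G Γ) (P : Γ.H → Prop) : Setoid {h : Γ.H // P h} where
  r p q := ∃ g : G, A.e g p.1 = q.1
  iseqv := by
    refine ⟨fun p => ⟨1, by simp⟩, ?_, ?_⟩
    · rintro p q ⟨g, hg⟩
      exact ⟨g⁻¹, by rw [← hg, ← Equiv.Perm.mul_apply, ← map_mul]; simp⟩
    · rintro a b c ⟨g₁, hg₁⟩ ⟨g₂, hg₂⟩
      exact ⟨g₂ * g₁, by rw [map_mul, Equiv.Perm.mul_apply, hg₁, hg₂]⟩

/-- The induced action of `g ∈ G` on vertices (defined via a chosen half-edge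
in the fibre of the vertex). -/
noncomputable def vmap (A : BrauerAction G Γ) (g : G) (μ : Γ.V) : Γ.V :=
  Γ.v (A.e g (Γ.v_surj μ).choose)

/-- The valency, in the orbit graph `Γ/G`, of the orbit vertex `μ̄` of `μ`: the number
of `G`-orbits of half-edges incident with a vertex in the orbit of `μ`. -/
noncomputable def orbVal (A : BrauerAction G Γ) (μ : Γ.V) : ℕ :=
  Nat.card (Quotient (A.subOrbSetoid (fun h => ∃ a : G, Γ.v (A.e a h) = μ)))

/-- The multiplicity function `m̄(μ̄) = val(μ)·m(μ)/val(μ̄)` of the orbit graph,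
expressed on representatives. -/
noncomputable def mbar (A : BrauerAction G Γ) (μ : Γ.V) : ℕ :=
  Γ.val μ * Γ.m μ / A.orbVal μ

end BrauerAction

namespace BrauerGraph

variable (Γ : BrauerGraph) {G : Type} [CommGroup G]

/-- `ω_μ`: the product of the values of a successor weighting `W` over all successor
pairs at the vertex `μ` (a successor pair `(i, σ i)` is identified with the half-edge
`i`). -/
noncomputable def omega (W : Γ.H → G) (μ : Γ.V) : G :=
  ∏ h ∈ Finset.univ.filter (fun h => Γ.v h = μ), W h

/-- `ω(i₁, i_{r+1})`: the product of the weights along the first `r` steps of the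
successor sequence of the half-edge `h`. -/
noncomputable def wpath (W : Γ.H → G) (h : Γ.H) (r : ℕ) : G :=
  ∏ t ∈ Finset.range r, W ((Γ.σ ^ t) h)

/-- The generating relation for the equivalence classes `[i, H_{μ,s}]` defining the
vertices of the Brauer covering graph `Δ_W`: a pair `(i, g)` (representing the pair of
`i` and the coset `H_{v i}·g`) is related to `(σ i, g·W(i))`, and to `(i, g·ω_{v i})`
(the latter identifies representatives of the same coset of `H_μ = ⟨ω_μ⟩`). -/
def covRel (W : Γ.H → G) : Γ.H × G → Γ.H × G → Prop := fun p q =>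
  (q.1 = Γ.σ p.1 ∧ q.2 = p.2 * W p.1) ∨ (q.1 = p.1 ∧ q.2 = p.2 * Γ.omega W (Γ.v p.1))

end BrauerGraph

/-- The action on half-edges descends to vertices. -/
theorem BrauerAction.v_congr {G : Type} [Group G] {Γ : BrauerGraph} (A : BrauerAction G Γ)
    (g : G) {h h' : Γ.H} (hv : Γ.v h = Γ.v h') : Γ.v (A.e g h) = Γ.v (A.e g h') := by
  obtain ⟨n, hn⟩ := (Γ.v_eq_iff h h').1 hv
  refine (Γ.v_eq_iff _ _).2 ⟨n, ?_⟩
  have hc : Commute (A.e g) Γ.σ := by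
    ext x
    exact A.comm_σ g x
  have h2 := (hc.zpow_right n).eq
  rw [← hn, ← Equiv.Perm.mul_apply, ← Equiv.Perm.mul_apply, h2]

/-- If a finite abelian group `G` acts faithfully on a finite connected
graph `Γ`, preserving the cyclic ordering of edges at each vertex (i.e. commuting with
the successor permutation) and freely on the edge set, then for every vertex `μ` the
valency of the orbit vertex `μ̄` in `Γ/G` divides the valency of `μ`. -/
theorem orbVal_dvd_val {G : Type} [CommGroup G] [Fintype G]
    (Γ : BrauerGraph) (A : BrauerAction G Γ) (hfree : A.IsFree) (μ : Γ.V) :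
    A.orbVal μ ∣ Γ.val μ := by
  classical
  obtain ⟨h0, hh0⟩ := Γ.v_surj μ
  let P : Γ.H → Prop := fun h => ∃ a : G, Γ.v (A.e a h) = μ
  have hinv : ∀ (g : G) (h : Γ.H), A.e g⁻¹ (A.e g h) = h := by
    intro g h
    rw [← Equiv.Perm.mul_apply, ← map_mul]
    simp
  have hrep : ∀ q : Quotient (A.subOrbSetoid P), ∃ p : {h : Γ.H // P h},
      Γ.v p.1 = μ ∧ Quotient.mk (A.subOrbSetoid P) p = q := by
    intro q
    induction q using Quotient.inductionOn with
    | h p =>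
      obtain ⟨h, a, ha⟩ := p
      refine ⟨⟨A.e a h, 1, by simpa using ha⟩, ha, ?_⟩
      exact Quotient.sound ⟨a⁻¹, hinv a h⟩
  choose rep hrep1 hrep2 using hrep
  have hK : ∀ (g : G) (h : Γ.H), Γ.v h = μ → Γ.v (A.e g h) = Γ.v (A.e g h0) :=
    fun g h hv => A.v_congr g (hv.trans hh0.symm)
  let f : Quotient (A.subOrbSetoid P) × {g : G // Γ.v (A.e g h0) = μ} →
      {h : Γ.H // Γ.v h = μ} :=
    fun x => ⟨A.e x.2.1 (rep x.1).1, (hK _ _ (hrep1 x.1)).trans x.2.2⟩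
  have hf : Function.Bijective f := by
    constructor
    · rintro ⟨q, g, hg⟩ ⟨q', g', hg'⟩ hE
      have hE' : A.e g (rep q).1 = A.e g' (rep q').1 := congrArg Subtype.val hE
      have hq : q = q' := by
        rw [← hrep2 q, ← hrep2 q']
        refine Quotient.sound ⟨g'⁻¹ * g, ?_⟩
        rw [map_mul, Equiv.Perm.mul_apply, hE', hinv]
      subst hq
      have h1 : g'⁻¹ * g = 1 := by
        apply hfree _ (rep q).1
        rw [map_mul, Equiv.Perm.mul_apply, hE', hinv]
      have h2 : g = g' := (inv_mul_eq_one.1 h1).symm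
      subst h2
      rfl
    · rintro ⟨h, hh⟩
      let p : {h : Γ.H // P h} := ⟨h, 1, by simpa using hh⟩
      obtain ⟨g, hg⟩ : ∃ g : G, A.e g (rep (Quotient.mk _ p)).1 = p.1 :=
        Quotient.exact (hrep2 (Quotient.mk _ p))
      refine ⟨⟨Quotient.mk _ p, g, ?_⟩, Subtype.ext hg⟩
      rw [← hK g _ (hrep1 (Quotient.mk _ p)), hg]
      exact hh
  have hcard := Nat.card_congr (Equiv.ofBijective f hf)
  rw [Nat.card_prod] at hcard
  exact ⟨_, hcard.symm⟩
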